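/- arXiv:2303.16481 — 2 statements merged into one kernel-verified Lean document; each statement's English description precedes it below -/
import Mathlib

section
/- Let X be an involutive BE algebra. Then for all x, y, z ∈ X: (1) (x∧y)→z = (y→x)→(y→z); (2) z→(x∨y) = (x→y)→(z→y); (3) x∧y ≤ x, x∧y ≤ y, x ≤ x∨y and y ≤ x∨y. Moreover, if X is self distributive, then (4) x∧y = y∧x and x∨y = y∨x for all x, y ∈ X. -/
/-- A bounded involutive BE algebra. -/
class InvBE (X : Type*) where
  imp : X → X → X
  one : X
  zero : X
  be1 : ∀ x : X, imp x x = one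
  be2 : ∀ x : X, imp x one = one
  be3 : ∀ x : X, imp one x = x
  be4 : ∀ x y z : X, imp x (imp y z) = imp y (imp x z)
  bound : ∀ x : X, imp zero x = one
  dn : ∀ x : X, imp (imp x zero) zero = x

namespace InvBE

variable {X : Type*} [InvBE X]

/-- Negation: `x* = x → 0`. -/
def neg (x : X) : X := imp x zero

/-- `x ∨ y = (x → y) → y`. -/
def sup (x y : X) : X := imp (imp x y) y

/-- `x ∧ y = ((x* → y*) → y*)*`. -/
def inf (x y : X) : X := neg (imp (imp (neg x) (neg y)) (neg y))

/-- `x ≤ y` iff `x → y = 1`. -/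
def le (x y : X) : Prop := imp x y = one

/-- `x ≤_Q y` iff `x = x ∧ y`. -/
def leQ (x y : X) : Prop := x = inf x y

end InvBE

/-!
Involution gives contraposition `x* → y* = y → x`, hence `x ∧ y = ((y → x) → y*)*`. Contraposing
`(x ∧ y) → z` and exchanging premises turns it into `(y → x) → (y → z)`, while
`z → (x ∨ y) = (x → y) → (z → y)` is an instance of exchange. The order bounds are the special
cases in which `z` is one of `x`, `y`. Under self distributivity the first formula becomes
`(x ∧ y) → z = y → (x → z)`, which exchange makes symmetric in `x` and `y`; taking `z = 0` shows
that `∧` is commutative, and De Morgan's law carries this over to `∨`.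
-/

namespace InvBE

variable {X : Type*} [InvBE X]

protected theorem neg_neg (x : X) : neg (neg x) = x :=
  dn x

protected theorem neg_injective : Function.Injective (neg : X → X) :=
  Function.LeftInverse.injective InvBE.neg_neg

theorem neg_imp_neg (x y : X) : imp (neg x) (neg y) = imp y x :=
  calc imp (neg x) (neg y)
    _ = imp y (neg (neg x)) := be4 _ _ _
    _ = imp y x := by rw [InvBE.neg_neg]

theorem neg_imp_comm (x y : X) : imp (neg x) y = imp (neg y) x := by
  rw [← neg_imp_neg x (neg y), InvBE.neg_neg]

theorem inf_eq_neg_imp_neg (x y : X) : inf x y = neg (imp (imp y x) (neg y)) := by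
  rw [inf, neg_imp_neg]

theorem neg_inf_neg (x y : X) : neg (inf (neg x) (neg y)) = sup x y := by
  simp only [inf, sup, InvBE.neg_neg]

theorem inf_imp (x y z : X) : imp (inf x y) z = imp (imp y x) (imp y z) :=
  calc imp (inf x y) z
    _ = imp (neg (imp (imp y x) (neg y))) z := by rw [inf_eq_neg_imp_neg]
    _ = imp (neg z) (imp (imp y x) (neg y)) := neg_imp_comm _ _
    _ = imp (imp y x) (imp (neg z) (neg y)) := be4 _ _ _
    _ = imp (imp y x) (imp y z) := by rw [neg_imp_neg]

theorem imp_sup (x y z : X) : imp z (sup x y) = imp (imp x y) (imp z y) :=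
  be4 _ _ _

protected theorem inf_le_left (x y : X) : le (inf x y) x := by
  rw [le, inf_imp, be1]

protected theorem inf_le_right (x y : X) : le (inf x y) y := by
  rw [le, inf_imp, be1, be2]

protected theorem le_sup_left (x y : X) : le x (sup x y) := by
  rw [le, imp_sup, be1]

protected theorem le_sup_right (x y : X) : le y (sup x y) := by
  rw [le, imp_sup, be1, be2]

variable (X) in
/-- Self distributivity of a BE algebra: implication distributes over itself from the left. As a
predicate on `X` it serves as the hypothesis under which `∧` and `∨` are commutative. -/
def SelfDistributive : Prop :=
  ∀ x y z : X, imp x (imp y z) = imp (imp x y) (imp x z)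

namespace SelfDistributive

protected theorem inf_imp (h : SelfDistributive X) (x y z : X) :
    imp (inf x y) z = imp y (imp x z) := by
  rw [InvBE.inf_imp, h y x z]

protected theorem inf_comm (h : SelfDistributive X) (x y : X) : inf x y = inf y x := by
  apply InvBE.neg_injective
  calc neg (inf x y)
    _ = imp y (imp x zero) := h.inf_imp x y zero
    _ = imp x (imp y zero) := be4 _ _ _
    _ = neg (inf y x) := (h.inf_imp y x zero).symm

protected theorem sup_comm (h : SelfDistributive X) (x y : X) : sup x y = sup y x := by
  rw [← neg_inf_neg, h.inf_comm, neg_inf_neg]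

end SelfDistributive

end InvBE

open InvBE in
theorem stmt_1 {X : Type*} [InvBE X] :
    (∀ x y z : X, imp (inf x y) z = imp (imp y x) (imp y z)) ∧
    (∀ x y z : X, imp z (sup x y) = imp (imp x y) (imp z y)) ∧
    (∀ x y : X, le (inf x y) x ∧ le (inf x y) y ∧ le x (sup x y) ∧ le y (sup x y)) ∧
    ((∀ x y z : X, imp x (imp y z) = imp (imp x y) (imp x z)) →
      ∀ x y : X, inf x y = inf y x ∧ sup x y = sup y x) :=
  ⟨inf_imp, imp_sup,
    fun x y => ⟨InvBE.inf_le_left x y, InvBE.inf_le_right x y,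
      InvBE.le_sup_left x y, InvBE.le_sup_right x y⟩,
    fun h x y => ⟨SelfDistributive.inf_comm h x y, SelfDistributive.sup_comm h x y⟩⟩
end

section
/- Every Wajsberg algebra (X, →, *, 1) is a quantum-Wajsberg algebra: X is an involutive bounded BE algebra (with 0 = 1* and the negation coinciding with x ↦ x→0) and satisfies the axiom (QW): x→((x∧y)∧(z∧x)) = (x→y)∧(x→z) for all x, y, z ∈ X. -/
/-- A Wajsberg algebra. -/
class Wajsberg (X : Type*) where
  imp : X → X → X
  neg : X → X
  one : X
  w1 : ∀ x : X, imp one x = x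
  w2 : ∀ x y z : X, imp (imp y z) (imp (imp z x) (imp y x)) = one
  w3 : ∀ x y : X, imp (imp x y) y = imp (imp y x) x
  w4 : ∀ x y : X, imp (imp (neg x) (neg y)) (imp y x) = one

namespace Wajsberg

variable {X : Type*} [Wajsberg X]

/-- `0 = 1*`. -/
def zero : X := neg one

/-- `x ≤ y` iff `x → y = 1`. -/
def le (x y : X) : Prop := imp x y = one

/-- `x ∨ y = (x → y) → y`. -/
def sup (x y : X) : X := imp (imp x y) y

/-- `x ∧ y = ((x* → y*) → y*)*`. -/
def inf (x y : X) : X := neg (imp (imp (neg x) (neg y)) (neg y))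

/-- `x ≤_Q y` iff `x = x ∧ y`. -/
def leQ (x y : X) : Prop := x = inf x y

end Wajsberg

/-!
Under `x ≤ y ↔ x → y = 1`, a Wajsberg algebra is a lattice with greatest element `1`, whose join is
`(x → y) → y` (symmetric by (W3)) and whose meet is obtained from it by De Morgan duality. The map
`x → ·` has a lower adjoint, namely `w ↦ (x → w*)*`, hence preserves meets, so that
`x → ((x ∧ y) ∧ (z ∧ x)) = ((x → x) ∧ (x → y)) ∧ ((x → z) ∧ (x → x))`. Since `x → x = 1`,
this is (QW).
-/

namespace Wajsberg

variable {X : Type*} [Wajsberg X]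

protected theorem imp_self (x : X) : imp x x = one := by
  simpa only [w1] using w2 x one one

instance : PartialOrder X where
  le := le
  le_refl := Wajsberg.imp_self
  le_trans x y z (hxy : imp x y = one) (hyz : imp y z = one) := by
    have h := w2 z x y
    rwa [hxy, hyz, w1, w1] at h
  le_antisymm x y (hxy : imp x y = one) (hyx : imp y x = one) := by
    have h := w3 x y
    rw [hxy, hyx, w1, w1] at h
    exact h.symm

theorem le_iff_imp_eq_one {x y : X} : x ≤ y ↔ imp x y = one := Iff.rfl

theorem le_imp_imp_self (x y : X) : x ≤ imp (imp x y) y := by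
  simpa only [w1, le_iff_imp_eq_one] using w2 y one x

theorem imp_one (x : X) : imp x one = one := by
  have h : imp x (imp (imp x one) one) = one := le_imp_imp_self x one
  rwa [w3, w1, Wajsberg.imp_self] at h

instance : OrderTop X where
  top := one
  le_top := imp_one

theorem imp_self_eq_top (x : X) : imp x x = ⊤ := Wajsberg.imp_self x

theorem le_imp (x y : X) : x ≤ imp y x := by
  have h := w2 x y one
  rwa [imp_one, w1, w1] at h

theorem imp_le_imp_right {x y : X} (h : x ≤ y) (z : X) : imp y z ≤ imp x z := by
  have hw := w2 z x y
  rwa [le_iff_imp_eq_one.1 h, w1] at hw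

theorem imp_imp_le_imp_imp (x y z : X) : imp x (imp y z) ≤ imp y (imp x z) :=
  calc
    imp x (imp y z) ≤ imp (imp (imp y z) z) (imp x z) := w2 z x (imp y z)
    _ ≤ imp y (imp x z) := imp_le_imp_right (le_imp_imp_self y z) (imp x z)

theorem imp_left_comm (x y z : X) : imp x (imp y z) = imp y (imp x z) :=
  (imp_imp_le_imp_imp x y z).antisymm (imp_imp_le_imp_imp y x z)

theorem neg_imp_zero_le (x : X) : imp (neg x) zero ≤ x := by
  have h := w4 x one
  rwa [w1] at h

theorem zero_le (x : X) : zero ≤ x :=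
  (le_imp zero (neg x)).trans (neg_imp_zero_le x)

theorem neg_le_imp_zero (x : X) : neg x ≤ imp x zero :=
  (le_imp (neg x) (neg zero)).trans (w4 zero x)

theorem neg_imp_zero (x : X) : imp (neg x) zero = x := by
  refine (neg_imp_zero_le x).antisymm ?_
  rw [le_iff_imp_eq_one, imp_left_comm]
  exact neg_le_imp_zero x

theorem imp_zero (x : X) : imp x zero = neg x :=
  calc
    imp x zero = imp (imp (neg x) zero) zero := by rw [neg_imp_zero]
    _ = imp (imp zero (neg x)) (neg x) := w3 _ _
    _ = neg x := by rw [le_iff_imp_eq_one.1 (zero_le (neg x)), w1]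

protected theorem neg_neg (x : X) : neg (neg x) = x := by
  rw [← imp_zero (neg x), neg_imp_zero]

theorem neg_imp_neg (x y : X) : imp (neg x) (neg y) = imp y x := by
  rw [← imp_zero y, imp_left_comm, neg_imp_zero]

protected theorem neg_le_neg_iff {x y : X} : neg x ≤ neg y ↔ y ≤ x := by
  rw [le_iff_imp_eq_one, neg_imp_neg, le_iff_imp_eq_one]

theorem neg_le_comm {x y : X} : neg x ≤ y ↔ neg y ≤ x := by
  rw [← Wajsberg.neg_le_neg_iff, Wajsberg.neg_neg]

theorem le_neg_comm {x y : X} : x ≤ neg y ↔ y ≤ neg x := by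
  rw [← Wajsberg.neg_le_neg_iff, Wajsberg.neg_neg]

instance : SemilatticeSup X where
  sup := sup
  le_sup_left := le_imp_imp_self
  le_sup_right x y := le_imp y (imp x y)
  sup_le x y z hxz hyz :=
    calc
      imp (imp x y) y ≤ imp (imp z y) y := imp_le_imp_right (imp_le_imp_right hxz y) y
      _ = imp (imp y z) z := w3 z y
      _ = z := by rw [le_iff_imp_eq_one.1 hyz, w1]

instance : Lattice X where
  inf := inf
  inf_le_left x y := neg_le_comm.1 (le_sup_left : neg x ≤ neg x ⊔ neg y)
  inf_le_right x y := neg_le_comm.1 (le_sup_right : neg y ≤ neg x ⊔ neg y)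
  le_inf _ _ _ hxy hxz :=
    le_neg_comm.1 (sup_le (Wajsberg.neg_le_neg_iff.2 hxy) (Wajsberg.neg_le_neg_iff.2 hxz))

/-- The product `x ⊙ y = (x → y*)*` of a Wajsberg algebra, the residuated companion of `imp`. -/
def mul (x y : X) : X := neg (imp x (neg y))

theorem mul_imp (x y z : X) : imp (mul x y) z = imp y (imp x z) :=
  calc
    imp (mul x y) z = imp (neg z) (imp x (neg y)) := by
      rw [← neg_imp_neg, mul, Wajsberg.neg_neg]
    _ = imp x (imp y z) := by rw [imp_left_comm, neg_imp_neg]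
    _ = imp y (imp x z) := imp_left_comm x y z

theorem gc_mul_imp (x : X) : GaloisConnection (mul x) (imp x) := fun y z => by
  rw [le_iff_imp_eq_one, mul_imp, le_iff_imp_eq_one]

theorem imp_inf_distrib (x y z : X) : imp x (y ⊓ z) = imp x y ⊓ imp x z :=
  (gc_mul_imp x).u_inf

theorem imp_inf_inf_inf (x y z : X) : imp x (x ⊓ y ⊓ (z ⊓ x)) = imp x y ⊓ imp x z := by
  simp only [imp_inf_distrib, imp_self_eq_top, top_inf_eq, inf_top_eq]

end Wajsberg

open Wajsberg in
theorem stmt_15 {X : Type*} [Wajsberg X] :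
    (∀ x : X, imp x x = one) ∧
    (∀ x : X, imp x one = one) ∧
    (∀ x : X, imp one x = x) ∧
    (∀ x y z : X, imp x (imp y z) = imp y (imp x z)) ∧
    (∀ x : X, imp (zero : X) x = one) ∧
    (∀ x : X, imp x (zero : X) = neg x) ∧
    (∀ x : X, neg (neg x) = x) ∧
    (∀ x y z : X, imp x (inf (inf x y) (inf z x)) = inf (imp x y) (imp x z)) := by
  exact ⟨Wajsberg.imp_self, Wajsberg.imp_one, w1, Wajsberg.imp_left_comm, Wajsberg.zero_le,
    Wajsberg.imp_zero, Wajsberg.neg_neg, imp_inf_inf_inf⟩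
end
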